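/- Let φ(λ) = bλ + ∫_{(0,∞)} (1 − e^{−λs}) ν(ds) be the Laplace exponent of a subordinator with Lévy measure ν, and suppose −φ'' ∈ WLSC(α−2, c, x₀) for some c ∈ (0,1], x₀ ≥ 0 and α > 0. Then there is C ≥ 1 such that for all 0 < r < 1/x₀ (all r > 0 if x₀ = 0): K(r) ≤ h(r) ≤ C·K(r), where K(r) = r^{−2} ∫_{(0,r)} s² ν(ds) and h(r) = ∫_{(0,∞)} min{1, s²/r²} ν(ds). -/

import Mathlib

open MeasureTheory Real Set

noncomputable section

/-- Weak lower scaling property at infinity. -/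
def WLSC (f : ℝ → ℝ) (θ c x₀ : ℝ) : Prop :=
  ∀ lam : ℝ, 1 ≤ lam → ∀ x : ℝ, x₀ < x → c * lam ^ θ * f x ≤ f (lam * x)

/-- The concentration function `K(r) = r^{−2} ∫_{(0,r)} s² ν(ds)`. -/
def concK (ν : Measure ℝ) (r : ℝ) : ℝ := (1 / r ^ 2) * ∫ s in Ioo (0:ℝ) r, s ^ 2 ∂ν

/-- The concentration function `h(r) = ∫_{(0,∞)} min{1, s²/r²} ν(ds)`. -/
def concH (ν : Measure ℝ) (r : ℝ) : ℝ := ∫ s in Ioi (0:ℝ), min 1 (s ^ 2 / r ^ 2) ∂ν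

lemma aux_integrable (μ : Measure ℝ) (hm : Integrable (fun s : ℝ => min 1 s) μ)
    (hpos : ∀ᵐ s ∂μ, (0:ℝ) < s) (f : ℝ → ℝ) (hf : Measurable f) (C : ℝ)
    (hC : ∀ s, 0 < s → |f s| ≤ C * min 1 s) : Integrable f μ := by
  refine (hm.const_mul C).mono' hf.aestronglyMeasurable ?_
  filter_upwards [hpos] with s hs
  exact hC s hs

lemma aux_exp (a s : ℝ) (ha : 0 < a) (hs : 0 < s) :
    s * Real.exp (-a * s) ≤ 1 / a := by
  have h1 := Real.add_one_le_exp (a * s)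
  have h2 : Real.exp (-a * s) * Real.exp (a * s) = 1 := by
    rw [← Real.exp_add]; simp
  have h3 := Real.exp_pos (-a * s)
  rw [le_div_iff₀ ha]
  nlinarith [mul_le_mul_of_nonneg_left h1 h3.le]

lemma aux_exp_le (a s : ℝ) (ha : 0 < a) (hs : 0 < s) : Real.exp (-a * s) ≤ 1 := by
  rw [Real.exp_le_one_iff]; nlinarith [mul_pos ha hs]

lemma aux_one (a s : ℝ) (ha : 0 < a) (hs : 0 < s) :
    s * Real.exp (-a * s) ≤ (1 + 1 / a) * min 1 s := by
  have h1 := aux_exp a s ha hs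
  have h2 := aux_exp_le a s ha hs
  have h3 : 0 < 1 / a := by positivity
  rcases min_cases 1 s with ⟨h, _⟩ | ⟨h, _⟩ <;> rw [h]
  · linarith
  · nlinarith [mul_le_mul_of_nonneg_left h2 hs.le, mul_pos h3 hs]

lemma aux_two (a s : ℝ) (ha : 0 < a) (hs : 0 < s) :
    s ^ 2 * Real.exp (-a * s) ≤ (1 / a + (2 / a) ^ 2) * min 1 s := by
  have h1 := aux_exp a s ha hs
  have h4 := aux_exp (a / 2) s (by positivity) hs
  have h3 : 0 < 1 / a := by positivity
  have h6 : 0 < (2 / a) ^ 2 := by positivity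
  rcases min_cases 1 s with ⟨h, _⟩ | ⟨h, _⟩ <;> rw [h]
  · have h5 : s ^ 2 * Real.exp (-a * s) = (s * Real.exp (-(a / 2) * s)) ^ 2 := by
      rw [mul_pow, ← Real.exp_nat_mul]; congr 2; push_cast; ring
    have h7 : (s * Real.exp (-(a / 2) * s)) ^ 2 ≤ (1 / (a / 2)) ^ 2 := by
      gcongr
    have h8 : 1 / (a / 2) = 2 / a := by field_simp
    rw [h8] at h7
    rw [h5]; linarith
  · nlinarith [mul_le_mul_of_nonneg_left h1 hs.le, mul_pos h6 hs]

lemma aux_zero (a s : ℝ) (ha : 0 < a) (hs : 0 < s) :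
    |1 - Real.exp (-a * s)| ≤ (1 + a) * min 1 s := by
  have h2 := aux_exp_le a s ha hs
  have h1 := Real.add_one_le_exp (-a * s)
  have h3 := Real.exp_pos (-a * s)
  rw [abs_of_nonneg (by linarith)]
  rcases min_cases 1 s with ⟨h, _⟩ | ⟨h, _⟩ <;> rw [h] <;> nlinarith

lemma aux_mono (x y s : ℝ) (h : x ≤ y) (hs : 0 < s) :
    Real.exp (-y * s) ≤ Real.exp (-x * s) := by
  apply Real.exp_le_exp.2; nlinarith

lemma aux_deriv1 (μ : Measure ℝ) (hm : Integrable (fun s : ℝ => min 1 s) μ)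
    (hpos : ∀ᵐ s ∂μ, (0:ℝ) < s) (x : ℝ) (hx : 0 < x) :
    HasDerivAt (fun y => ∫ s, (1 - Real.exp (-y * s)) ∂μ)
      (∫ s, s * Real.exp (-x * s) ∂μ) x := by
  refine (hasDerivAt_integral_of_dominated_loc_of_deriv_le (μ := μ) (s := Ioi (x / 2))
    (F := fun y s => 1 - Real.exp (-y * s)) (F' := fun y s => s * Real.exp (-y * s))
    (bound := fun s => s * Real.exp (-(x/2) * s)) (Ioi_mem_nhds (by linarith)) ?_ ?_ ?_ ?_ ?_ ?_).2
  · exact Filter.Eventually.of_forall fun y => by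
      apply Measurable.aestronglyMeasurable; fun_prop
  · exact aux_integrable μ hm hpos _ (by fun_prop) _ fun s hs => aux_zero x s hx hs
  · apply Measurable.aestronglyMeasurable; fun_prop
  · filter_upwards [hpos] with s hs y hy
    rw [Real.norm_of_nonneg (by positivity)]
    exact mul_le_mul_of_nonneg_left (aux_mono _ _ _ (le_of_lt hy) hs) hs.le
  · refine aux_integrable μ hm hpos _ (by fun_prop) (1 + 1 / (x/2)) fun s hs => ?_
    rw [abs_of_nonneg (by positivity)]
    exact aux_one (x/2) s (by positivity) hs
  · refine Filter.Eventually.of_forall fun s y _ => ?_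
    have h1 : HasDerivAt (fun y : ℝ => -y * s) (-1 * s) y :=
      ((hasDerivAt_id y).neg).mul_const s
    convert (h1.exp).const_sub 1 using 1
    ring

lemma aux_deriv2 (μ : Measure ℝ) (hm : Integrable (fun s : ℝ => min 1 s) μ)
    (hpos : ∀ᵐ s ∂μ, (0:ℝ) < s) (x : ℝ) (hx : 0 < x) :
    HasDerivAt (fun y => ∫ s, s * Real.exp (-y * s) ∂μ)
      (∫ s, -(s ^ 2 * Real.exp (-x * s)) ∂μ) x := by
  refine (hasDerivAt_integral_of_dominated_loc_of_deriv_le (μ := μ) (s := Ioi (x / 2))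
    (F := fun y s => s * Real.exp (-y * s)) (F' := fun y s => -(s ^ 2 * Real.exp (-y * s)))
    (bound := fun s => s ^ 2 * Real.exp (-(x/2) * s))
    (Ioi_mem_nhds (by linarith)) ?_ ?_ ?_ ?_ ?_ ?_).2
  · exact Filter.Eventually.of_forall fun y => by
      apply Measurable.aestronglyMeasurable; fun_prop
  · refine aux_integrable μ hm hpos _ (by fun_prop) (1 + 1 / x) fun s hs => ?_
    rw [abs_of_nonneg (by positivity)]
    exact aux_one x s hx hs
  · apply Measurable.aestronglyMeasurable; fun_prop
  · filter_upwards [hpos] with s hs y hy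
    rw [norm_neg, Real.norm_of_nonneg (by positivity)]
    exact mul_le_mul_of_nonneg_left (aux_mono _ _ _ (le_of_lt hy) hs) (by positivity)
  · refine aux_integrable μ hm hpos _ (by fun_prop) (1 / (x/2) + (2 / (x/2)) ^ 2) fun s hs => ?_
    rw [abs_of_nonneg (by positivity)]
    exact aux_two (x/2) s (by positivity) hs
  · refine Filter.Eventually.of_forall fun s y _ => ?_
    have h1 : HasDerivAt (fun y : ℝ => -y * s) (-1 * s) y :=
      ((hasDerivAt_id y).neg).mul_const s
    have h2 := (h1.exp).const_mul s
    have e : s * (Real.exp (-y * s) * (-1 * s)) = -(s ^ 2 * Real.exp (-y * s)) := by ring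
    rw [e] at h2
    exact h2

lemma aux_phi (φ : ℝ → ℝ) (b : ℝ) (μ : Measure ℝ)
    (hm : Integrable (fun s : ℝ => min 1 s) μ) (hpos : ∀ᵐ s ∂μ, (0:ℝ) < s)
    (hφ : ∀ lam : ℝ, 0 ≤ lam → φ lam = b * lam + ∫ s, (1 - Real.exp (-lam * s)) ∂μ)
    (x : ℝ) (hx : 0 < x) :
    -(deriv (deriv φ) x) = ∫ s, s ^ 2 * Real.exp (-x * s) ∂μ := by
  have h1 : ∀ y, 0 < y → deriv φ y = b + ∫ s, s * Real.exp (-y * s) ∂μ := by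
    intro y hy
    have h := ((hasDerivAt_id y).const_mul b).add (aux_deriv1 μ hm hpos y hy)
    rw [mul_one] at h
    refine (h.congr_of_eventuallyEq ?_).deriv
    filter_upwards [Ioi_mem_nhds hy] with z hz
    exact hφ z (le_of_lt hz)
  have h := (aux_deriv2 μ hm hpos x hx).const_add b
  have h2 : deriv (deriv φ) x = _ := (h.congr_of_eventuallyEq (by
    filter_upwards [Ioi_mem_nhds hx] with z hz
    exact h1 z hz)).deriv
  rw [h2, integral_neg, neg_neg]

lemma aux_min (r s : ℝ) (hr : 0 < r) (hs : 0 < s) :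
    |min 1 (s ^ 2 / r ^ 2)| ≤ (1 + 1 / r ^ 2) * min 1 s := by
  rw [abs_of_nonneg (by positivity)]
  have h0 : 0 < 1 / r ^ 2 := by positivity
  have e : s ^ 2 / r ^ 2 = s ^ 2 * (1 / r ^ 2) := by ring
  rcases min_cases 1 s with ⟨h, _⟩ | ⟨h, h'⟩ <;> rw [h]
  · exact (min_le_left _ _).trans (by linarith)
  · refine (min_le_right _ _).trans ?_
    rw [e]
    have : s ^ 2 ≤ s := by nlinarith
    nlinarith [mul_le_mul_of_nonneg_right this h0.le]

/-- pointwise step for `h(r) ≤ h(M r) + e^M G(1/r)` -/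
lemma aux_step (M r s : ℝ) (hM : 1 < M) (hr : 0 < r) (hs : 0 < s) :
    min 1 (s ^ 2 / r ^ 2) ≤ min 1 (s ^ 2 / (M * r) ^ 2)
      + Real.exp M * ((1 / r) ^ 2 * (s ^ 2 * Real.exp (-(1 / r) * s))) := by
  by_cases h : s ≤ M * r
  · have h1 : 1 ≤ Real.exp M * Real.exp (-(1 / r) * s) := by
      rw [← Real.exp_add]
      apply Real.one_le_exp
      have : s / r ≤ M := by rw [div_le_iff₀ hr]; exact h
      have e : -(1 / r) * s = - (s / r) := by ring
      rw [e]; linarith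
    have h2 : (0:ℝ) ≤ min 1 (s ^ 2 / (M * r) ^ 2) := by positivity
    have h3 := min_le_right 1 (s ^ 2 / r ^ 2)
    have h4 : 0 ≤ s ^ 2 / r ^ 2 := by positivity
    have e : Real.exp M * ((1 / r) ^ 2 * (s ^ 2 * Real.exp (-(1 / r) * s)))
      = (s ^ 2 / r ^ 2) * (Real.exp M * Real.exp (-(1 / r) * s)) := by field_simp
    rw [e]
    nlinarith [mul_le_mul_of_nonneg_left h1 h4]
  · push Not at h
    have h1 : 1 ≤ s ^ 2 / (M * r) ^ 2 := by
      rw [one_le_div (by positivity)]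
      gcongr
    rw [min_eq_left h1]
    have : 0 ≤ Real.exp M * ((1 / r) ^ 2 * (s ^ 2 * Real.exp (-(1 / r) * s))) := by positivity
    linarith [min_le_left 1 (s ^ 2 / r ^ 2)]

theorem aux_main (ν μ : Measure ℝ) (α c x₀ : ℝ) (hμ : μ = ν.restrict (Ioi 0))
    (hm : Integrable (fun s : ℝ => min 1 s) μ) (hpos : ∀ᵐ s ∂μ, (0:ℝ) < s)
    (g : ℝ → ℝ) (hg : ∀ x, 0 < x → g x = ∫ s, s ^ 2 * Real.exp (-x * s) ∂μ)
    (hα : 0 < α) (hc : 0 < c) (hc1 : c ≤ 1) (hx₀ : 0 ≤ x₀)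
    (hscal : WLSC g (α - 2) c x₀) :
    ∃ C : ℝ, 1 ≤ C ∧
      ∀ r : ℝ, 0 < r → r * x₀ < 1 →
        concK ν r ≤ concH ν r ∧ concH ν r ≤ C * concK ν r := by
  have hH : ∀ r, concH ν r = ∫ s, min 1 (s ^ 2 / r ^ 2) ∂μ := fun r => by
    rw [concH, hμ]
  have hK : ∀ r, concK ν r = (1 / r ^ 2) * ∫ s, (Ioo 0 r).indicator (fun s => s ^ 2) s ∂μ := by
    intro r
    rw [concK, integral_indicator measurableSet_Ioo, hμ, Measure.restrict_restrict measurableSet_Ioo,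
      inter_eq_left.2 Ioo_subset_Ioi_self]
  have iH : ∀ r, 0 < r → Integrable (fun s : ℝ => min 1 (s ^ 2 / r ^ 2)) μ := fun r hr =>
    aux_integrable μ hm hpos _ (by fun_prop) _ fun s hs => aux_min r s hr hs
  have iG : ∀ x, 0 < x → Integrable (fun s : ℝ => s ^ 2 * Real.exp (-x * s)) μ := fun x hx =>
    aux_integrable μ hm hpos _ (by fun_prop) _ fun s hs => by
      rw [abs_of_nonneg (by positivity)]; exact aux_two x s hx hs
  have pK : ∀ r : ℝ, 0 < r → ∀ s : ℝ, (1 / r ^ 2) * (Ioo 0 r).indicator (fun s => s ^ 2) s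
      ≤ min 1 (s ^ 2 / r ^ 2) := by
    intro r hr s
    by_cases h : s ∈ Ioo 0 r
    · rw [indicator_of_mem h]
      have e : 1 / r ^ 2 * s ^ 2 = s ^ 2 / r ^ 2 := by ring
      rw [e]
      refine le_min ?_ le_rfl
      rw [div_le_one (by positivity)]
      have := h.1; have := h.2
      gcongr
    · rw [indicator_of_notMem h, mul_zero]; positivity
  have iK : ∀ r, 0 < r → Integrable (fun s => (Ioo 0 r).indicator (fun s : ℝ => s ^ 2) s) μ := by
    intro r hr
    refine ((iH r hr).const_mul (r ^ 2)).mono'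
      (Measurable.aestronglyMeasurable (Measurable.indicator (by fun_prop) measurableSet_Ioo)) ?_
    refine Filter.Eventually.of_forall fun s => ?_
    rw [Real.norm_of_nonneg (indicator_nonneg (fun _ _ => sq_nonneg _) _)]
    have := mul_le_mul_of_nonneg_left (pK r hr s) (sq_nonneg r)
    rwa [← mul_assoc, mul_one_div_cancel (by positivity), one_mul] at this
  have KH : ∀ r, 0 < r → concK ν r ≤ concH ν r := by
    intro r hr
    rw [hK, hH, ← integral_const_mul]
    exact integral_mono ((iK r hr).const_mul _) (iH r hr) (pK r hr)
  have Hmono : ∀ r R, 0 < r → r ≤ R → concH ν R ≤ concH ν r := by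
    intro r R hr hR
    rw [hH, hH]
    refine integral_mono (iH R (by linarith)) (iH r hr) fun s => ?_
    refine min_le_min le_rfl ?_
    gcongr
  have gnn : ∀ x, 0 < x → 0 ≤ g x := fun x hx => by
    rw [hg x hx]; exact integral_nonneg fun s => by positivity
  have ganti : ∀ x y, 0 < x → x ≤ y → g y ≤ g x := by
    intro x y hx hy
    rw [hg x hx, hg y (by linarith)]
    refine integral_mono_ae (iG y (by linarith)) (iG x hx) ?_
    filter_upwards [hpos] with s hs
    exact mul_le_mul_of_nonneg_left (aux_mono _ _ _ hy hs) (by positivity)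
  have Hnn : ∀ r, 0 ≤ concH ν r := fun r => by
    rw [hH]; exact integral_nonneg fun s => by positivity
  have Knn : ∀ r, 0 ≤ concK ν r := fun r => by
    rw [hK]; exact mul_nonneg (by positivity) (integral_nonneg fun s =>
      indicator_nonneg (fun _ _ => sq_nonneg _) _)
  set G : ℝ → ℝ := fun x => x ^ 2 * g x with hG
  have Gnn : ∀ x, 0 < x → 0 ≤ G x := fun x hx => mul_nonneg (sq_nonneg _) (gnn x hx)
  -- scaling of G
  have Gs : ∀ lam, 1 ≤ lam → ∀ x, x₀ < x → c * lam ^ α * G x ≤ G (lam * x) := by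
    intro lam hl x hx
    have h := hscal lam hl x hx
    have hl0 : 0 < lam := by linarith
    rw [Real.rpow_sub hl0, Real.rpow_two] at h
    have h2 := mul_le_mul_of_nonneg_left h (sq_nonneg (lam * x))
    have e : (lam * x) ^ 2 * (c * (lam ^ α / lam ^ 2) * g x) = c * lam ^ α * (x ^ 2 * g x) := by
      field_simp
    rw [e] at h2
    exact h2
  -- Step 1
  obtain ⟨c1, hc1pos, hKG⟩ : ∃ c1, 0 < c1 ∧ ∀ r, 0 < r → r * x₀ < 1 →
      c1 * G (1 / r) ≤ concK ν r := by
    have ht := tendsto_rpow_mul_exp_neg_mul_atTop_nhds_zero (2 - α) 1 one_pos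
    have hev := ht.eventually_lt_const (show (0:ℝ) < c / 2 * Real.exp (-1) by positivity)
    obtain ⟨lam, h1, hl⟩ := (hev.and (Filter.eventually_ge_atTop 1)).exists
    have hl0 : 0 < lam := by linarith
    refine ⟨c / 2 * lam ^ (α - 2), by positivity, fun r hr hrx => ?_⟩
    have hx : x₀ < 1 / r := by rw [lt_div_iff₀ hr]; linarith
    have hexp : Real.exp (1 - lam) ≤ c / 2 * lam ^ (α - 2) := by
      have e1 : lam ^ (2 - α) * lam ^ (α - 2) = 1 := by
        rw [← Real.rpow_add hl0]; simp
      have e2 : Real.exp (1 - lam) = Real.exp 1 * Real.exp (-1 * lam) := by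
        rw [← Real.exp_add]; ring_nf
      have e3 : Real.exp 1 * Real.exp (-1) = 1 := by rw [← Real.exp_add]; simp
      have h2 := mul_le_mul_of_nonneg_left h1.le
        (show 0 ≤ Real.exp 1 * lam ^ (α - 2) by positivity)
      calc Real.exp (1 - lam)
          = (lam ^ (2 - α) * lam ^ (α - 2)) * (Real.exp 1 * Real.exp (-1 * lam)) := by
            rw [e1, e2, one_mul]
        _ = Real.exp 1 * lam ^ (α - 2) * (lam ^ (2 - α) * Real.exp (-1 * lam)) := by ring
        _ ≤ _ := h2
        _ = (Real.exp 1 * Real.exp (-1)) * (c / 2 * lam ^ (α - 2)) := by ring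
        _ = _ := by rw [e3, one_mul]
    have hr1 : 0 < 1 / r := by positivity
    have h3 := hscal lam hl (1 / r) hx
    have h4 : g (lam * (1 / r)) ≤ (∫ s, (Ioo 0 r).indicator (fun s => s ^ 2) s ∂μ)
        + Real.exp (1 - lam) * g (1 / r) := by
      rw [hg _ (by positivity), hg _ hr1, ← integral_const_mul,
        ← integral_add (iK r hr) ((iG _ hr1).const_mul _)]
      refine integral_mono_ae (iG _ (by positivity))
        ((iK r hr).add ((iG _ hr1).const_mul _)) ?_
      filter_upwards [hpos] with s hs
      by_cases h : s < r
      · rw [indicator_of_mem (show s ∈ Ioo 0 r from ⟨hs, h⟩)]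
        have := aux_exp_le (lam * (1 / r)) s (by positivity) hs
        have h5 : 0 ≤ Real.exp (1 - lam) * (s ^ 2 * Real.exp (-(1 / r) * s)) := by positivity
        nlinarith [mul_le_mul_of_nonneg_left this (sq_nonneg s)]
      · rw [indicator_of_notMem (fun h' => h h'.2), zero_add]
        have h6 : Real.exp (-(lam * (1 / r)) * s) ≤
            Real.exp (1 - lam) * Real.exp (-(1 / r) * s) := by
          rw [← Real.exp_add]
          apply Real.exp_le_exp.2
          have : 1 ≤ 1 / r * s := by
            rw [one_div_mul_eq_div, one_le_div hr]; linarith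
          nlinarith
        nlinarith [mul_le_mul_of_nonneg_left h6 (sq_nonneg s)]
    have h7 := mul_le_mul_of_nonneg_right hexp (gnn _ hr1)
    have h8 : c / 2 * lam ^ (α - 2) * g (1 / r) ≤
        ∫ s, (Ioo 0 r).indicator (fun s => s ^ 2) s ∂μ := by linarith
    have h9 := mul_le_mul_of_nonneg_left h8 (show 0 ≤ 1 / r ^ 2 by positivity)
    rw [hK]
    refine le_trans (le_of_eq ?_) h9
    simp only [hG]; ring
  -- Step 2
  obtain ⟨M, hcM, hM⟩ : ∃ M : ℝ, 2 / c ≤ M ^ α ∧ 1 < M :=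
    (((tendsto_rpow_atTop hα).eventually_ge_atTop (2 / c)).and
      (Filter.eventually_gt_atTop 1)).exists
  have hM0 : 0 < M := by linarith
  have hcM2 : 2 ≤ c * M ^ α := by rw [div_le_iff₀ hc] at hcM; linarith
  have Hstep : ∀ r, 0 < r → concH ν r ≤ concH ν (M * r) + Real.exp M * G (1 / r) := by
    intro r hr
    have hr1 : 0 < 1 / r := by positivity
    simp only [hG]
    rw [hH, hH, hg _ hr1, ← integral_const_mul, ← integral_const_mul,
      ← integral_add (iH _ (by positivity)) (((iG _ hr1).const_mul _).const_mul _)]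
    refine integral_mono_ae (iH r hr)
      ((iH _ (by positivity)).add (((iG _ hr1).const_mul _).const_mul _)) ?_
    filter_upwards [hpos] with s hs
    exact aux_step M r s hM hr hs
  have Gstep : ∀ r, 0 < r → M * r * x₀ < 1 → 2 * G (1 / (M * r)) ≤ G (1 / r) := by
    intro r hr h
    have hx : x₀ < 1 / (M * r) := by rw [lt_div_iff₀ (by positivity)]; linarith
    have h1 := Gs M hM.le _ hx
    have e : M * (1 / (M * r)) = 1 / r := by field_simp
    rw [e] at h1
    exact (mul_le_mul_of_nonneg_right hcM2 (Gnn _ (by positivity))).trans h1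
  have eMpos := Real.exp_pos M
  rcases hx₀.eq_or_lt with h0 | h0
  · -- x₀ = 0
    subst h0
    have P : ∀ n : ℕ, ∀ r, 0 < r →
        concH ν r ≤ concH ν (M ^ n * r) + 2 * Real.exp M * G (1 / r) := by
      intro n
      induction n with
      | zero =>
        intro r hr
        have := Gnn (1 / r) (by positivity)
        rw [pow_zero, one_mul]
        nlinarith [mul_nonneg eMpos.le this]
      | succ n ih =>
        intro r hr
        have h1 := Hstep r hr
        have h2 := ih (M * r) (by positivity)
        have h3 := mul_le_mul_of_nonneg_left (Gstep r hr (by simp)) eMpos.le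
        rw [← mul_assoc, ← pow_succ] at h2
        linarith
    have lim : ∀ r, 0 < r → Filter.Tendsto (fun n : ℕ => concH ν (M ^ n * r)) Filter.atTop
        (nhds 0) := by
      intro r hr
      have : Filter.Tendsto (fun n : ℕ => ∫ s, min 1 (s ^ 2 / (M ^ n * r) ^ 2) ∂μ) Filter.atTop
          (nhds (∫ s, (0:ℝ) ∂μ)) := by
        refine tendsto_integral_of_dominated_convergence (fun s => min 1 (s ^ 2 / r ^ 2))
          (fun n => (iH _ (by positivity)).aestronglyMeasurable) (iH r hr) ?_ ?_
        · intro n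
          refine Filter.Eventually.of_forall fun s => ?_
          rw [Real.norm_of_nonneg (by positivity)]
          refine min_le_min le_rfl ?_
          gcongr
          exact le_mul_of_one_le_left hr.le (one_le_pow₀ hM.le)
        · refine Filter.Eventually.of_forall fun s => ?_
          have t1 : Filter.Tendsto (fun n : ℕ => (M ^ n * r) ^ 2) Filter.atTop Filter.atTop :=
            (Filter.tendsto_pow_atTop two_ne_zero).comp
              ((tendsto_pow_atTop_atTop_of_one_lt hM).atTop_mul_const hr)
          have t2 := t1.const_div_atTop (s ^ 2)
          have t3 := (tendsto_const_nhds (x := (1:ℝ))).min t2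
          simpa using t3
      simpa [hH] using this
    refine ⟨max 1 (2 * Real.exp M / c1), le_max_left _ _, fun r hr hrx => ⟨KH r hr, ?_⟩⟩
    have h1 : concH ν r ≤ 0 + 2 * Real.exp M * G (1 / r) :=
      ge_of_tendsto ((lim r hr).add_const _) (Filter.Eventually.of_forall fun n => P n r hr)
    have h2 := mul_le_mul_of_nonneg_left (hKG r hr hrx)
      (show 0 ≤ 2 * Real.exp M / c1 by positivity)
    have e : 2 * Real.exp M / c1 * (c1 * G (1 / r)) = 2 * Real.exp M * G (1 / r) := by
      field_simp
    have h3 := mul_le_mul_of_nonneg_right (le_max_right 1 (2 * Real.exp M / c1)) (Knn r)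
    linarith
  · -- x₀ > 0
    set H0 := concH ν (1 / x₀) with hH0
    have P : ∀ n : ℕ, ∀ r, 0 < r → r * x₀ < 1 → 1 ≤ M ^ n * r * x₀ →
        concH ν r ≤ H0 + 2 * Real.exp M * G (1 / r) := by
      intro n
      induction n with
      | zero =>
        intro r hr h1 h2
        rw [pow_zero, one_mul] at h2
        linarith
      | succ n ih =>
        intro r hr h1 h2
        have h3 := Hstep r hr
        have h6 := Gnn (1 / r) (by positivity)
        by_cases h : M * r * x₀ < 1
        · have h4 := ih (M * r) (by positivity) h (by rw [← mul_assoc, ← pow_succ]; exact h2)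
          have h5 := mul_le_mul_of_nonneg_left (Gstep r hr h) eMpos.le
          linarith
        · push Not at h
          have h4 : concH ν (M * r) ≤ H0 := by
            apply Hmono _ _ (by positivity)
            rw [div_le_iff₀ h0]; exact h
          nlinarith [mul_nonneg eMpos.le h6]
    have P' : ∀ r, 0 < r → r * x₀ < 1 → concH ν r ≤ H0 + 2 * Real.exp M * G (1 / r) := by
      intro r hr hrx
      obtain ⟨n, hn⟩ := pow_unbounded_of_one_lt (1 / (r * x₀)) hM
      refine P n r hr hrx ?_
      rw [div_lt_iff₀ (by positivity)] at hn
      linarith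
    have x2 : 0 < 2 * x₀ := by linarith
    rcases (Gnn (2 * x₀) x2).eq_or_lt with hz | hz
    · have hg0 : ∫ s, s ^ 2 * Real.exp (-(2 * x₀) * s) ∂μ = 0 := by
        rw [← hg _ x2]
        rcases mul_eq_zero.1 hz.symm with h | h
        · exact absurd h (by positivity)
        · exact h
      rw [integral_eq_zero_iff_of_nonneg (fun s => by positivity) (iG _ x2)] at hg0
      have Hz : ∀ r, concH ν r = 0 := by
        intro r
        rw [hH]
        refine integral_eq_zero_of_ae ?_
        filter_upwards [hg0, hpos] with s h1 hs
        have : 0 < s ^ 2 * Real.exp (-(2 * x₀) * s) := by positivity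
        exact absurd h1 this.ne'
      refine ⟨1, le_rfl, fun r hr hrx => ⟨KH r hr, ?_⟩⟩
      rw [Hz, one_mul]; exact Knn r
    · have Glow : ∀ x, x₀ < x → c / 4 * G (2 * x₀) ≤ G x := by
        intro x hx
        rcases le_total (2 * x₀) x with h | h
        · have hl : 1 ≤ x / (2 * x₀) := by rw [one_le_div x2]; exact h
          have h1 := Gs _ hl (2 * x₀) (by linarith)
          rw [div_mul_cancel₀ _ x2.ne'] at h1
          have h2 : 1 ≤ (x / (2 * x₀)) ^ α := Real.one_le_rpow hl hα.le
          refine le_trans ?_ h1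
          apply mul_le_mul_of_nonneg_right _ hz.le
          nlinarith
        · have h1 := ganti x (2 * x₀) (by linarith) h
          have h2 : 1 / 4 * G (2 * x₀) ≤ G x := by
            calc 1 / 4 * G (2 * x₀) = x₀ ^ 2 * g (2 * x₀) := by simp only [hG]; ring
              _ ≤ x ^ 2 * g x := by
                have := gnn _ x2
                gcongr
          refine le_trans ?_ h2
          apply mul_le_mul_of_nonneg_right _ hz.le
          linarith
      set D := H0 / (c / 4 * G (2 * x₀)) + 2 * Real.exp M with hD
      have hH0n : 0 ≤ H0 := Hnn _
      have hDn : 0 ≤ D := by positivity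
      refine ⟨max 1 (D / c1), le_max_left _ _, fun r hr hrx => ⟨KH r hr, ?_⟩⟩
      have hx : x₀ < 1 / r := by rw [lt_div_iff₀ hr]; linarith
      have h1 := P' r hr hrx
      have h2 := mul_le_mul_of_nonneg_left (hKG r hr hrx) (show 0 ≤ D / c1 by positivity)
      have e : D / c1 * (c1 * G (1 / r)) = D * G (1 / r) := by field_simp
      have h3 := mul_le_mul_of_nonneg_right (le_max_right 1 (D / c1)) (Knn r)
      have h4 := mul_le_mul_of_nonneg_left (Glow _ hx)
        (show 0 ≤ H0 / (c / 4 * G (2 * x₀)) by positivity)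
      rw [div_mul_cancel₀ _ (by positivity)] at h4
      have e2 : D * G (1 / r) = H0 / (c / 4 * G (2 * x₀)) * G (1 / r)
        + 2 * Real.exp M * G (1 / r) := by rw [hD]; ring
      linarith

/-- If `−φ'' ∈ WLSC(α−2, c, x₀)` then `K(r) ≤ h(r) ≤ C·K(r)`
for all `0 < r < 1/x₀` (all `r > 0` if `x₀ = 0`). -/
theorem concentration_functions_comparable
    (φ : ℝ → ℝ) (b : ℝ) (ν : Measure ℝ) (α c x₀ : ℝ)
    (hb : 0 ≤ b)
    (hνfin : ∫⁻ s in Ioi (0:ℝ), ENNReal.ofReal (min 1 s) ∂ν ≠ ⊤)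
    (hφ : ∀ lam : ℝ, 0 ≤ lam →
      φ lam = b * lam + ∫ s in Ioi (0:ℝ), (1 - Real.exp (-lam * s)) ∂ν)
    (hα : 0 < α) (hc : 0 < c) (hc1 : c ≤ 1) (hx₀ : 0 ≤ x₀)
    (hscal : WLSC (fun x => -(deriv (deriv φ) x)) (α - 2) c x₀) :
    ∃ C : ℝ, 1 ≤ C ∧
      ∀ r : ℝ, 0 < r → r * x₀ < 1 →
        concK ν r ≤ concH ν r ∧ concH ν r ≤ C * concK ν r := by
  have hpos : ∀ᵐ s ∂(ν.restrict (Ioi 0)), (0:ℝ) < s := ae_restrict_mem measurableSet_Ioi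
  have hm : Integrable (fun s : ℝ => min 1 s) (ν.restrict (Ioi 0)) := by
    refine ⟨Measurable.aestronglyMeasurable (by fun_prop), ?_⟩
    rw [hasFiniteIntegral_iff_ofReal]
    · exact lt_top_iff_ne_top.2 hνfin
    · filter_upwards [hpos] with s hs
      exact le_min zero_le_one hs.le
  exact aux_main ν _ α c x₀ rfl hm hpos _
    (fun x hx => aux_phi φ b _ hm hpos hφ x hx) hα hc hc1 hx₀ hscal
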